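/- Let d ≥ 1, 0 < s < 1, 1 < p < 2, and let K : ℝ^d × ℝ^d → ℝ be measurable with 0 < k_* ≤ K(x,y) ≤ k^* for a.e. (x,y). Let u, v : ℝ^d → ℝ be measurable with finite Gagliardo seminorms [u]_{s,p} < ∞ and [v]_{s,p} < ∞, not both zero. Then, as (possibly infinite) integrals of nonnegative functions, ∫_{ℝ^d}∫_{ℝ^d} K(x,y) ( |δ^s u|^{p−2} δ^s u − |δ^s v|^{p−2} δ^s v ) (δ^s u − δ^s v) |x−y|^{−d} dx dy ≥ (p − 1) 2^{(p² − 4p + 2)/p} k_* [u − v]_{s,p}² / ( [u]_{s,p} + [v]_{s,p} )^{2−p}. -/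

import Mathlib

open MeasureTheory

/-- Euclidean space `ℝ^d`. -/
abbrev Ed (d : ℕ) : Type := EuclideanSpace ℝ (Fin d)

/-- The fractional difference quotient `δ^s u(x,y) = (u(x) - u(y))/|x-y|^s`. -/
noncomputable def deltaS {d : ℕ} (s : ℝ) (u : Ed d → ℝ) (x y : Ed d) : ℝ :=
  (u x - u y) / ‖x - y‖ ^ s

/-- The `p`-th power of the Gagliardo `W^{s,p}` seminorm, as a value in `[0,∞]`. -/
noncomputable def gagliardoPow (d : ℕ) (s p : ℝ) (w : Ed d → ℝ) : ENNReal :=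
  ∫⁻ q : Ed d × Ed d, ENNReal.ofReal (|w q.1 - w q.2| ^ p / ‖q.1 - q.2‖ ^ ((d : ℝ) + s * p))

/-- The Gagliardo `W^{s,p}` seminorm `[w]_{s,p}` (finite when `gagliardoPow` is finite). -/
noncomputable def gagliardoSemi (d : ℕ) (s p : ℝ) (w : Ed d → ℝ) : ℝ :=
  (gagliardoPow d s p w).toReal ^ ((1 : ℝ) / p)

lemma phi_aux1 (p : ℝ) (hp1 : 1 < p) (hp2 : p < 2) (a b : ℝ) (hb : 0 ≤ b) (hab : b < a) :
    (p - 1) * (a + b) ^ (p - 2) * (a - b) ≤ a ^ (p - 2) * a - b ^ (p - 2) * b := by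
  have ha : 0 < a := lt_of_le_of_lt hb hab
  have h1 : (a + b) ^ (p - 2) ≤ a ^ (p - 2) :=
    Real.rpow_le_rpow_of_nonpos ha (by linarith) (by linarith)
  have e1 : a ^ (p - 2) * a = a ^ (p - 1) := by
    rw [← Real.rpow_add_one ha.ne']; ring_nf
  have e2 : b ^ (p - 2) * b = b ^ (p - 1) := by
    rcases hb.eq_or_lt with h | h
    · rw [← h, mul_zero, Real.zero_rpow (by linarith)]
    · rw [← Real.rpow_add_one h.ne']; ring_nf
  have h2 : (b / a) ^ (p - 1) ≤ 1 + (p - 1) * (b / a - 1) := by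
    have := rpow_one_add_le_one_add_mul_self (s := b / a - 1) (p := p - 1)
      (by have : 0 ≤ b / a := by positivity
          linarith) (by linarith) (by linarith)
    simpa using this
  rw [Real.div_rpow hb ha.le, div_le_iff₀ (by positivity), ← e1] at h2
  have h3 : (1 + (p - 1) * (b / a - 1)) * (a ^ (p - 2) * a)
      = a ^ (p - 2) * a - (p - 1) * a ^ (p - 2) * (a - b) := by
    field_simp; ring
  rw [e2]
  have h4 : (p - 1) * (a + b) ^ (p - 2) * (a - b) ≤ (p - 1) * a ^ (p - 2) * (a - b) := by
    have : 0 ≤ a - b := by linarith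
    have : 0 ≤ p - 1 := by linarith
    gcongr
  linarith

lemma phi_aux2 (p : ℝ) (hp1 : 1 < p) (hp2 : p < 2) (a c : ℝ) (ha : 0 ≤ a) (hc : 0 ≤ c) :
    (p - 1) * (a + c) ^ (p - 2) * (a + c) ≤ a ^ (p - 2) * a + c ^ (p - 2) * c := by
  have key : ∀ x y : ℝ, 0 ≤ x → 0 ≤ y → (x + y) ^ (p - 2) * x ≤ x ^ (p - 2) * x := by
    intro x y hx hy
    rcases hx.eq_or_lt with h | h
    · rw [← h]; simp
    · have := Real.rpow_le_rpow_of_nonpos h (show x ≤ x + y by linarith) (show p - 2 ≤ 0 by linarith)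
      gcongr
  have h1 := key a c ha hc
  have h2 := key c a hc ha
  rw [add_comm c a] at h2
  have h3 : 0 ≤ (a + c) ^ (p - 2) * (a + c) := by positivity
  nlinarith

lemma phi_lt (p : ℝ) (hp1 : 1 < p) (hp2 : p < 2) (a b : ℝ) (hab : b < a) :
    (p - 1) * (|a| + |b|) ^ (p - 2) * (a - b) ≤ |a| ^ (p - 2) * a - |b| ^ (p - 2) * b := by
  rcases le_total 0 b with hb | hb
  · rw [abs_of_nonneg hb, abs_of_nonneg (hb.trans hab.le)]
    exact phi_aux1 p hp1 hp2 a b hb hab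
  · rcases le_total 0 a with ha | ha
    · rw [abs_of_nonneg ha, abs_of_nonpos hb]
      have := phi_aux2 p hp1 hp2 a (-b) ha (by linarith)
      rw [← sub_eq_add_neg] at *
      linarith
    · rw [abs_of_nonpos ha, abs_of_nonpos hb]
      have := phi_aux1 p hp1 hp2 (-b) (-a) (by linarith) (by linarith)
      rw [add_comm (-b)] at this
      linarith

/-- pointwise monotonicity -/
lemma phi_mono (p : ℝ) (hp1 : 1 < p) (hp2 : p < 2) (a b : ℝ) :
    (p - 1) * (a - b) ^ 2 ≤
      ((|a| ^ (p - 2) * a - |b| ^ (p - 2) * b) * (a - b)) * (|a| + |b|) ^ (2 - p) := by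
  have key : ∀ a b : ℝ, b < a → (p - 1) * (a - b) ^ 2 ≤
      ((|a| ^ (p - 2) * a - |b| ^ (p - 2) * b) * (a - b)) * (|a| + |b|) ^ (2 - p) := by
    intro a b hab
    have h := phi_lt p hp1 hp2 a b hab
    have hS : 0 < |a| + |b| := by
      rcases eq_or_ne a 0 with h0 | h0
      · have : b ≠ 0 := by intro h; linarith
        positivity
      · positivity
    have h' := mul_le_mul_of_nonneg_right h
      (show 0 ≤ (a - b) * (|a| + |b|) ^ (2 - p) from mul_nonneg (by linarith) (by positivity))
    have e : (|a| + |b|) ^ (p - 2) * (|a| + |b|) ^ (2 - p) = 1 := by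
      rw [← Real.rpow_add hS]; simp
    calc (p - 1) * (a - b) ^ 2
        = (p - 1) * (a - b) ^ 2 * ((|a| + |b|) ^ (p - 2) * (|a| + |b|) ^ (2 - p)) := by
          rw [e, mul_one]
      _ = _ := by ring
      _ ≤ _ := h'
      _ = _ := by ring
  rcases lt_trichotomy b a with h | h | h
  · exact key a b h
  · subst h; simp
  · have := key b a h
    rw [add_comm |b|] at this
    nlinarith

lemma phi_nonneg (p : ℝ) (hp1 : 1 < p) (hp2 : p < 2) (a b : ℝ) :
    0 ≤ (|a| ^ (p - 2) * a - |b| ^ (p - 2) * b) * (a - b) := by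
  have hp : 0 ≤ p - 1 := by linarith
  rcases lt_trichotomy b a with h | h | h
  · have h1 := phi_lt p hp1 hp2 a b h
    have : 0 ≤ a - b := by linarith
    have h2 : 0 ≤ (p - 1) * (|a| + |b|) ^ (p - 2) * (a - b) := by positivity
    exact mul_nonneg (h2.trans h1) this
  · subst h; simp
  · have h1 := phi_lt p hp1 hp2 b a h
    have : 0 ≤ b - a := by linarith
    have h2 : 0 ≤ (p - 1) * (|b| + |a|) ^ (p - 2) * (b - a) := by positivity
    have := mul_nonneg (h2.trans h1) this
    linarith

/-- pointwise Hölder-ready form -/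
lemma phi_holder (p : ℝ) (hp1 : 1 < p) (hp2 : p < 2) (a b D : ℝ) (hD : 0 ≤ D) :
    |a - b| ^ p / D ≤
      (((|a| ^ (p - 2) * a - |b| ^ (p - 2) * b) * (a - b)) / (p - 1) / D) ^ (p / 2) *
      ((|a| + |b|) ^ p / D) ^ ((2 - p) / 2) := by
  have hp : 0 < p - 1 := by linarith
  have hF := phi_nonneg p hp1 hp2 a b
  have hm := phi_mono p hp1 hp2 a b
  set F := (|a| ^ (p - 2) * a - |b| ^ (p - 2) * b) * (a - b)
  have hG : 0 ≤ F / (p - 1) := by positivity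
  have hS : 0 ≤ |a| + |b| := by positivity
  have h1 : (a - b) ^ 2 ≤ F / (p - 1) * (|a| + |b|) ^ (2 - p) := by
    rw [div_mul_eq_mul_div, le_div_iff₀ hp]; linarith
  rcases hD.eq_or_lt with h | h
  · rw [← h]; simp only [div_zero]; positivity
  have h2 : |a - b| ^ p ≤ (F / (p - 1)) ^ (p / 2) * ((|a| + |b|) ^ p) ^ ((2 - p) / 2) := by
    have h3 := Real.rpow_le_rpow (sq_nonneg _) h1 (show 0 ≤ p / 2 by linarith)
    rw [Real.mul_rpow hG (by positivity), ← Real.rpow_mul hS, ← sq_abs, ← Real.rpow_natCast,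
      ← Real.rpow_mul (abs_nonneg _)] at h3
    rw [← Real.rpow_mul hS]
    convert h3 using 2
    · push_cast; ring
    · ring_nf
  rw [Real.div_rpow hG hD, Real.div_rpow (by positivity) hD, div_mul_div_comm, ← Real.rpow_add h]
  have : p / 2 + (2 - p) / 2 = 1 := by ring
  rw [this, Real.rpow_one]
  gcongr

lemma lint_holder {α : Type*} [MeasurableSpace α] (μ : Measure α) (p : ℝ) (hp1 : 1 < p)
    (hp2 : p < 2) (a b D : α → ℝ) (ha : Measurable a) (hb : Measurable b) (hD : Measurable D)
    (hD0 : ∀ x, 0 ≤ D x) :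
    ∫⁻ x, ENNReal.ofReal (|a x - b x| ^ p / D x) ∂μ ≤
      (∫⁻ x, ENNReal.ofReal (((|a x| ^ (p - 2) * a x - |b x| ^ (p - 2) * b x) * (a x - b x))
        / (p - 1) / D x) ∂μ) ^ (p / 2) *
      (((∫⁻ x, ENNReal.ofReal (|a x| ^ p / D x) ∂μ) ^ (1 / p) +
        (∫⁻ x, ENNReal.ofReal (|b x| ^ p / D x) ∂μ) ^ (1 / p)) ^ p) ^ ((2 - p) / 2) := by
  have hp : 0 < p := by linarith
  have hpow : ∀ (t : ℝ) (x : α), 0 ≤ t → ENNReal.ofReal (t ^ p / D x) =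
      ENNReal.ofReal (t / D x ^ (1 / p)) ^ p := by
    intro t x ht
    have := Real.rpow_nonneg (hD0 x) (1 / p)
    rw [ENNReal.ofReal_rpow_of_nonneg (by positivity) hp.le, Real.div_rpow ht this,
      ← Real.rpow_mul (hD0 x), one_div_mul_cancel hp.ne', Real.rpow_one]
  have hmink : ∫⁻ x, ENNReal.ofReal ((|a x| + |b x|) ^ p / D x) ∂μ ≤
      ((∫⁻ x, ENNReal.ofReal (|a x| ^ p / D x) ∂μ) ^ (1 / p) +
        (∫⁻ x, ENNReal.ofReal (|b x| ^ p / D x) ∂μ) ^ (1 / p)) ^ p := by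
    have h := ENNReal.lintegral_Lp_add_le (μ := μ) (p := p)
      (f := fun x => ENNReal.ofReal (|a x| / D x ^ (1 / p)))
      (g := fun x => ENNReal.ofReal (|b x| / D x ^ (1 / p)))
      (by fun_prop) (by fun_prop) hp1.le
    have e : ∀ x, ((fun x => ENNReal.ofReal (|a x| / D x ^ (1 / p))) +
        (fun x => ENNReal.ofReal (|b x| / D x ^ (1 / p)))) x ^ p =
        ENNReal.ofReal ((|a x| + |b x|) ^ p / D x) := by
      intro x
      have := Real.rpow_nonneg (hD0 x) (1 / p)
      rw [Pi.add_apply, ← ENNReal.ofReal_add (by positivity) (by positivity), ← add_div,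
        hpow _ _ (by positivity)]
    simp only [e] at h
    simp only [← hpow _ _ (abs_nonneg _)] at h
    have h2 := ENNReal.rpow_le_rpow h hp.le
    rwa [← ENNReal.rpow_mul, one_div_mul_cancel hp.ne', ENNReal.rpow_one] at h2
  calc ∫⁻ x, ENNReal.ofReal (|a x - b x| ^ p / D x) ∂μ
      ≤ ∫⁻ x, ENNReal.ofReal (((|a x| ^ (p - 2) * a x - |b x| ^ (p - 2) * b x) * (a x - b x))
        / (p - 1) / D x) ^ (p / 2) *
        ENNReal.ofReal ((|a x| + |b x|) ^ p / D x) ^ ((2 - p) / 2) ∂μ := by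
        refine lintegral_mono fun x => ?_
        have hF := phi_nonneg p hp1 hp2 (a x) (b x)
        have h0 := hD0 x
        have hp' : 0 < p - 1 := by linarith
        rw [ENNReal.ofReal_rpow_of_nonneg (by positivity) (by linarith),
          ENNReal.ofReal_rpow_of_nonneg (by positivity) (by linarith),
          ← ENNReal.ofReal_mul (by positivity)]
        exact ENNReal.ofReal_le_ofReal (phi_holder p hp1 hp2 _ _ _ (hD0 x))
    _ ≤ _ := ENNReal.lintegral_mul_norm_pow_le (by fun_prop) (by fun_prop)
        (by linarith) (by linarith) (by ring)
    _ ≤ _ := by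
        gcongr

lemma gagliardoPow_eq (d : ℕ) (s p : ℝ) (hs : 0 < s) (hp : 0 < p) (w : Ed d → ℝ) :
    gagliardoPow d s p w =
      ∫⁻ q : Ed d × Ed d, ENNReal.ofReal (|deltaS s w q.1 q.2| ^ p / ‖q.1 - q.2‖ ^ (d : ℝ)) := by
  unfold gagliardoPow deltaS
  refine lintegral_congr fun q => ?_
  have h := norm_nonneg (q.1 - q.2)
  rw [abs_div, abs_of_nonneg (Real.rpow_nonneg h s), Real.div_rpow (abs_nonneg _) (by positivity),
    ← Real.rpow_mul h, Real.rpow_add_of_nonneg h (by positivity) (by positivity), div_div,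
    mul_comm (_ ^ (d : ℝ))]

lemma measurable_deltaS (d : ℕ) (s : ℝ) (w : Ed d → ℝ) (hw : Measurable w) :
    Measurable (fun q : Ed d × Ed d => deltaS s w q.1 q.2) := by
  unfold deltaS
  fun_prop

/-- Coercivity of the anisotropic fractional p-Laplacian for `1 < p < 2`: for `u, v` with
finite `W^{s,p}` seminorms, not both zero,
`⟨𝓛_p^s u - 𝓛_p^s v, u - v⟩ ≥ (p-1) 2^{(p²-4p+2)/p} k_* [u-v]²_{s,p} / ([u]_{s,p} + [v]_{s,p})^{2-p}`
as integrals of nonnegative functions. -/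
theorem pLaplacian_coercivity_singular
    (d : ℕ) (hd : 1 ≤ d) (s : ℝ) (hs0 : 0 < s) (hs1 : s < 1)
    (p : ℝ) (hp1 : 1 < p) (hp2 : p < 2) (ks kS : ℝ) (hks : 0 < ks) (hksS : ks ≤ kS)
    (K : Ed d → Ed d → ℝ)
    (hKmeas : Measurable (fun q : Ed d × Ed d => K q.1 q.2))
    (hKbdd : ∀ᵐ q : Ed d × Ed d, ks ≤ K q.1 q.2 ∧ K q.1 q.2 ≤ kS)
    (u v : Ed d → ℝ) (hu : Measurable u) (hv : Measurable v)
    (hfinu : gagliardoPow d s p u ≠ ⊤) (hfinv : gagliardoPow d s p v ≠ ⊤)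
    (hnz : ¬ (gagliardoSemi d s p u = 0 ∧ gagliardoSemi d s p v = 0)) :
    ENNReal.ofReal ((p - 1) * (2 : ℝ) ^ ((p ^ 2 - 4 * p + 2) / p) * ks *
        (gagliardoSemi d s p (fun z => u z - v z)) ^ 2 /
        (gagliardoSemi d s p u + gagliardoSemi d s p v) ^ (2 - p)) ≤
      ∫⁻ q : Ed d × Ed d,
        ENNReal.ofReal (K q.1 q.2 *
          ((|deltaS s u q.1 q.2| ^ (p - 2) * deltaS s u q.1 q.2 -
            |deltaS s v q.1 q.2| ^ (p - 2) * deltaS s v q.1 q.2) *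
            (deltaS s u q.1 q.2 - deltaS s v q.1 q.2)) / ‖q.1 - q.2‖ ^ (d : ℝ)) := by
  have hp : 0 < p := by linarith
  have hp' : 0 < p - 1 := by linarith
  have H := lint_holder (volume : Measure (Ed d × Ed d)) p hp1 hp2
    (fun q => deltaS s u q.1 q.2) (fun q => deltaS s v q.1 q.2) (fun q => ‖q.1 - q.2‖ ^ (d : ℝ))
    (measurable_deltaS d s u hu) (measurable_deltaS d s v hv) (by fun_prop)
    (fun q => by positivity)
  rw [← gagliardoPow_eq d s p hs0 hp u, ← gagliardoPow_eq d s p hs0 hp v] at H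
  have hw : gagliardoPow d s p (fun z => u z - v z) = ∫⁻ q : Ed d × Ed d,
      ENNReal.ofReal (|deltaS s u q.1 q.2 - deltaS s v q.1 q.2| ^ p / ‖q.1 - q.2‖ ^ (d : ℝ)) := by
    rw [gagliardoPow_eq d s p hs0 hp]
    refine lintegral_congr fun q => ?_
    congr 4
    unfold deltaS
    ring
  rw [← hw] at H
  set J := ∫⁻ q : Ed d × Ed d, ENNReal.ofReal (((|deltaS s u q.1 q.2| ^ (p - 2) * deltaS s u q.1 q.2 -
            |deltaS s v q.1 q.2| ^ (p - 2) * deltaS s v q.1 q.2) *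
            (deltaS s u q.1 q.2 - deltaS s v q.1 q.2)) / (p - 1) / ‖q.1 - q.2‖ ^ (d : ℝ)) with hJ
  have hR : ENNReal.ofReal (ks * (p - 1)) * J ≤ ∫⁻ q : Ed d × Ed d,
        ENNReal.ofReal (K q.1 q.2 *
          ((|deltaS s u q.1 q.2| ^ (p - 2) * deltaS s u q.1 q.2 -
            |deltaS s v q.1 q.2| ^ (p - 2) * deltaS s v q.1 q.2) *
            (deltaS s u q.1 q.2 - deltaS s v q.1 q.2)) / ‖q.1 - q.2‖ ^ (d : ℝ)) := by
    rw [hJ, ← lintegral_const_mul' _ _ ENNReal.ofReal_ne_top]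
    refine lintegral_mono_ae ?_
    filter_upwards [hKbdd] with q hq
    rw [← ENNReal.ofReal_mul (by positivity)]
    refine ENNReal.ofReal_le_ofReal ?_
    have hF := phi_nonneg p hp1 hp2 (deltaS s u q.1 q.2) (deltaS s v q.1 q.2)
    set F := (|deltaS s u q.1 q.2| ^ (p - 2) * deltaS s u q.1 q.2 -
            |deltaS s v q.1 q.2| ^ (p - 2) * deltaS s v q.1 q.2) *
            (deltaS s u q.1 q.2 - deltaS s v q.1 q.2)
    have e : ks * (p - 1) * (F / (p - 1) / ‖q.1 - q.2‖ ^ (d : ℝ)) =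
        ks * F / ‖q.1 - q.2‖ ^ (d : ℝ) := by
      field_simp
    rw [e]
    have := hq.1
    gcongr
  refine le_trans ?_ hR
  by_cases hJt : J = ⊤
  · rw [hJt, ENNReal.mul_top (by simpa using mul_pos hks hp')]
    exact le_top
  have hA : (gagliardoPow d s p u) ^ (1 / p) ≠ ⊤ := ENNReal.rpow_ne_top_of_nonneg (by positivity) hfinu
  have hB : (gagliardoPow d s p v) ^ (1 / p) ≠ ⊤ := ENNReal.rpow_ne_top_of_nonneg (by positivity) hfinv
  have H2 := ENNReal.toReal_mono (ENNReal.mul_ne_top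
    (ENNReal.rpow_ne_top_of_nonneg (by positivity) hJt)
    (ENNReal.rpow_ne_top_of_nonneg (by linarith) (ENNReal.rpow_ne_top_of_nonneg hp.le
      (ENNReal.add_ne_top.2 ⟨hA, hB⟩)))) H
  rw [ENNReal.toReal_mul, ← ENNReal.toReal_rpow, ← ENNReal.toReal_rpow, ← ENNReal.toReal_rpow,
    ENNReal.toReal_add hA hB, ← ENNReal.toReal_rpow, ← ENNReal.toReal_rpow] at H2
  change _ ≤ _ * ((gagliardoSemi d s p u + gagliardoSemi d s p v) ^ p) ^ ((2 - p) / 2) at H2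
  have hA0 : 0 ≤ gagliardoSemi d s p u := Real.rpow_nonneg ENNReal.toReal_nonneg _
  have hB0 : 0 ≤ gagliardoSemi d s p v := Real.rpow_nonneg ENNReal.toReal_nonneg _
  have hAB : 0 < gagliardoSemi d s p u + gagliardoSemi d s p v := by
    refine lt_of_le_of_ne (by positivity) fun h => hnz ⟨by linarith, by linarith⟩
  set A := gagliardoSemi d s p u + gagliardoSemi d s p v
  have hj0 : 0 ≤ J.toReal := ENNReal.toReal_nonneg
  have H3 : gagliardoSemi d s p (fun z => u z - v z) ^ 2 ≤ J.toReal * A ^ (2 - p) := by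
    have h := Real.rpow_le_rpow ENNReal.toReal_nonneg H2 (show 0 ≤ 2 / p by positivity)
    rw [Real.mul_rpow (by positivity) (by positivity), ← Real.rpow_mul hj0, ← Real.rpow_mul hAB.le,
      ← Real.rpow_mul hAB.le] at h
    have e1 : p / 2 * (2 / p) = 1 := by field_simp
    have e2 : p * ((2 - p) / 2) * (2 / p) = 2 - p := by field_simp
    rw [e1, e2, Real.rpow_one] at h
    unfold gagliardoSemi
    rw [← Real.rpow_natCast, ← Real.rpow_mul ENNReal.toReal_nonneg]
    convert h using 2
    push_cast; ring
  have h2e : (2 : ℝ) ^ ((p ^ 2 - 4 * p + 2) / p) ≤ 1 :=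
    Real.rpow_le_one_of_one_le_of_nonpos (by norm_num)
      (div_nonpos_of_nonpos_of_nonneg (by nlinarith) hp.le)
  rw [← ENNReal.ofReal_toReal hJt, ← ENNReal.ofReal_mul (by positivity)]
  refine ENNReal.ofReal_le_ofReal ?_
  rw [div_le_iff₀ (by positivity)]
  calc (p - 1) * (2 : ℝ) ^ ((p ^ 2 - 4 * p + 2) / p) * ks *
        gagliardoSemi d s p (fun z => u z - v z) ^ 2
      ≤ (p - 1) * 1 * ks * (J.toReal * A ^ (2 - p)) := by gcongr
    _ = _ := by ring
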